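/- For every B > 0 and every t ∈ ℝ, ∫_{ℝ²} ∫_{ℝ²} |γ_B(x_⊥)|² |γ_B(y_⊥)|² / √(|x_⊥ − y_⊥|² + t²) dx_⊥ dy_⊥ = (1/√2) · V_U^B(t/√2). -/

import Mathlib

open MeasureTheory Real Filter

noncomputable section


/-- The effective Coulomb potential `V_U^B(t) = ∫₀^∞ e^{−u} / √(t² + 2u/B) du`. -/
def VU (B : ℝ) (t : ℝ) : ℝ :=
  ∫ u in Set.Ioi (0 : ℝ), Real.exp (-u) / Real.sqrt (t ^ 2 + 2 * u / B)

/-!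
Completing the square in `a‖x‖² + b‖x - w‖²` shows that integrating a product of two Gaussian
weights along the fibres of `(x, y) ↦ x - y` leaves a Gaussian weight in `w = x - y`. In the plane
`|γ_B|²` is a Gaussian probability density, and polar coordinates then make `B‖x - y‖²/4` a standard
exponential variable, so the double integral of `k(‖x - y‖²)` is `∫₀^∞ e^{-u} k(4u/B) du`. For
`k(r) = (r + t²)^{-1/2}` the integrand is that of `V_U^B(t/√2)`, up to the factor `1/√2`.
-/

section GaussianProduct

variable {V : Type*} [NormedAddCommGroup V] [InnerProductSpace ℝ V] {a b : ℝ}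

theorem mul_sq_norm_add_mul_sq_norm_sub (hab : a + b ≠ 0) (x w : V) :
    a * ‖x‖ ^ 2 + b * ‖x - w‖ ^ 2 =
      (a + b) * ‖x - (b / (a + b)) • w‖ ^ 2 + a * b / (a + b) * ‖w‖ ^ 2 := by
  simp only [norm_sub_sq_real, norm_smul, inner_smul_right, mul_pow, Real.norm_eq_abs, sq_abs]
  field

theorem exp_neg_mul_sq_norm_mul_exp_neg_mul_sq_norm_sub (hab : a + b ≠ 0) (x w : V) :
    Real.exp (-a * ‖x‖ ^ 2) * Real.exp (-b * ‖x - w‖ ^ 2) =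
      Real.exp (-(a + b) * ‖x - (b / (a + b)) • w‖ ^ 2) *
        Real.exp (-(a * b / (a + b)) * ‖w‖ ^ 2) := by
  rw [← Real.exp_add, ← Real.exp_add]
  congr 1
  linear_combination -mul_sq_norm_add_mul_sq_norm_sub hab x w

variable [FiniteDimensional ℝ V] [MeasurableSpace V] [BorelSpace V]

theorem integrable_exp_neg_mul_sq_norm (hb : 0 < b) :
    Integrable fun x : V => Real.exp (-b * ‖x‖ ^ 2) := by
  apply Integrable.of_integral_ne_zero
  rw [GaussianFourier.integral_rexp_neg_mul_sq_norm hb]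
  positivity

theorem integrable_exp_neg_mul_sq_norm_mul_exp_neg_mul_sq_norm_sub (hab : 0 < a + b) (w : V) :
    Integrable fun x : V => Real.exp (-a * ‖x‖ ^ 2) * Real.exp (-b * ‖x - w‖ ^ 2) := by
  simp_rw [exp_neg_mul_sq_norm_mul_exp_neg_mul_sq_norm_sub hab.ne' _ w]
  exact ((integrable_exp_neg_mul_sq_norm hab).comp_sub_right _).mul_const _

theorem integral_exp_neg_mul_sq_norm_mul_exp_neg_mul_sq_norm_sub (hab : 0 < a + b) (w : V) :
    ∫ x : V, Real.exp (-a * ‖x‖ ^ 2) * Real.exp (-b * ‖x - w‖ ^ 2) =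
      (π / (a + b)) ^ (Module.finrank ℝ V / 2 : ℝ) *
        Real.exp (-(a * b / (a + b)) * ‖w‖ ^ 2) := by
  simp_rw [exp_neg_mul_sq_norm_mul_exp_neg_mul_sq_norm_sub hab.ne' _ w]
  rw [integral_mul_const,
    integral_sub_right_eq_self (fun x : V => Real.exp (-(a + b) * ‖x‖ ^ 2)),
    GaussianFourier.integral_rexp_neg_mul_sq_norm hab]

variable {E : Type*} [NormedAddCommGroup E] [NormedSpace ℝ E]

theorem integrable_prod_exp_neg_mul_sq_norm_smul (hab : 0 < a + b) {k : V → E}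
    (hk : Integrable fun w => Real.exp (-(a * b / (a + b)) * ‖w‖ ^ 2) • k w) :
    Integrable (fun p : V × V =>
      (Real.exp (-a * ‖p.1‖ ^ 2) * Real.exp (-b * ‖p.1 - p.2‖ ^ 2)) • k p.2)
      (volume.prod volume) := by
  have hk_meas : AEStronglyMeasurable k := by
    have h_exp : Continuous fun w : V => Real.exp (a * b / (a + b) * ‖w‖ ^ 2) := by fun_prop
    refine (h_exp.aestronglyMeasurable.smul hk.aestronglyMeasurable).congr
      (Eventually.of_forall fun w => ?_)
    simp [smul_smul, ← Real.exp_add]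
  have h_meas := (by fun_prop : Continuous fun p : V × V => Real.exp (-a * ‖p.1‖ ^ 2) *
    Real.exp (-b * ‖p.1 - p.2‖ ^ 2)).aestronglyMeasurable.smul
      (hk_meas.comp_snd (μ := volume))
  refine (integrable_prod_iff' h_meas).2 ⟨Eventually.of_forall fun w =>
    (integrable_exp_neg_mul_sq_norm_mul_exp_neg_mul_sq_norm_sub hab w).smul_const (k w), ?_⟩
  simp only [norm_smul, norm_mul, Real.norm_eq_abs, Real.abs_exp, Pi.smul_apply'] at hk ⊢
  simp_rw [integral_mul_const, integral_exp_neg_mul_sq_norm_mul_exp_neg_mul_sq_norm_sub hab,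
    mul_assoc]
  simpa only [norm_smul, Real.norm_eq_abs, Real.abs_exp] using hk.norm.const_mul _

theorem integral_integral_exp_neg_mul_sq_norm_smul_sub [CompleteSpace E] (hab : 0 < a + b)
    {k : V → E} (hk : Integrable fun w => Real.exp (-(a * b / (a + b)) * ‖w‖ ^ 2) • k w) :
    ∫ x : V, ∫ y : V, (Real.exp (-a * ‖x‖ ^ 2) * Real.exp (-b * ‖y‖ ^ 2)) • k (x - y) =
      (π / (a + b)) ^ (Module.finrank ℝ V / 2 : ℝ) •
        ∫ w : V, Real.exp (-(a * b / (a + b)) * ‖w‖ ^ 2) • k w := by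
  calc
    _ = ∫ x : V, ∫ w : V,
          (Real.exp (-a * ‖x‖ ^ 2) * Real.exp (-b * ‖x - w‖ ^ 2)) • k w := by
      congr 1 with x
      rw [← integral_sub_left_eq_self _ volume x]
      simp only [sub_sub_cancel]
    _ = ∫ w : V, ∫ x : V,
          (Real.exp (-a * ‖x‖ ^ 2) * Real.exp (-b * ‖x - w‖ ^ 2)) • k w :=
      integral_integral_swap (integrable_prod_exp_neg_mul_sq_norm_smul hab hk)
    _ = _ := by
      simp_rw [integral_smul_const,
        integral_exp_neg_mul_sq_norm_mul_exp_neg_mul_sq_norm_sub hab, mul_smul]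
      rw [integral_smul]

end GaussianProduct

theorem rpow_sub_one_mul_rpow_rpow_natCast_div_sub_one {x p : ℝ} (hx : 0 < x) (hp : p ≠ 0) {n : ℕ}
    (hn : n ≠ 0) : x ^ (p - 1) * (x ^ p) ^ (n / p - 1) = x ^ (n - 1) := by
  rw [← Real.rpow_mul hx.le, ← Real.rpow_add hx, ← Real.rpow_natCast,
    Nat.cast_pred (Nat.pos_of_ne_zero hn)]
  congr 1
  field

section Polar

variable {V E : Type*} [NormedAddCommGroup V] [NormedSpace ℝ V] [FiniteDimensional ℝ V]
  [Nontrivial V] [MeasurableSpace V] [BorelSpace V] (μ : Measure V) [μ.IsAddHaarMeasure]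
  [NormedAddCommGroup E] [NormedSpace ℝ E]

theorem integral_comp_sq_norm_addHaar (f : ℝ → E) :
    ∫ x, f (‖x‖ ^ 2) ∂μ =
      (Module.finrank ℝ V / 2 * μ.real (Metric.ball 0 1)) •
        ∫ u in Set.Ioi (0 : ℝ), u ^ (Module.finrank ℝ V / 2 - 1 : ℝ) • f u := by
  rw [integral_fun_norm_addHaar μ fun r => f (r ^ 2), ← Nat.cast_smul_eq_nsmul ℝ, smul_smul,
    ← integral_comp_rpow_Ioi_of_pos (g := fun u => u ^ (_ : ℝ) • f u) two_pos,
    ← integral_smul, ← integral_smul]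
  refine setIntegral_congr_fun measurableSet_Ioi fun x (hx : 0 < x) => ?_
  rw [← rpow_sub_one_mul_rpow_rpow_natCast_div_sub_one hx two_ne_zero Module.finrank_pos.ne']
  simp only [smul_smul, Real.rpow_two]
  congr 1
  ring

theorem integrable_comp_sq_norm_addHaar {f : ℝ → E} :
    Integrable (fun x => f (‖x‖ ^ 2)) μ ↔
      IntegrableOn (fun u : ℝ => u ^ (Module.finrank ℝ V / 2 - 1 : ℝ) • f u) (Set.Ioi 0) := by
  rw [integrable_fun_norm_addHaar μ (f := fun r => f (r ^ 2)),
    ← integrableOn_Ioi_comp_rpow_iff' (fun u => u ^ (_ : ℝ) • f u) two_ne_zero]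
  refine integrableOn_congr_fun (fun x (hx : 0 < x) => ?_) measurableSet_Ioi
  rw [← rpow_sub_one_mul_rpow_rpow_natCast_div_sub_one hx two_ne_zero Module.finrank_pos.ne']
  simp only [smul_smul, Real.rpow_two]

end Polar

/-- The density `|γ_B(x)|²` of the lowest Landau level state `γ_B` in the plane orthogonal to the
magnetic field. -/
def landauDensity (B : ℝ) (x : EuclideanSpace ℝ (Fin 2)) : ℝ :=
  B / (2 * π) * Real.exp (-(B / 2) * ‖x‖ ^ 2)

theorem integral_integral_landauDensity_smul_comp_sq_norm_sub {E : Type*} [NormedAddCommGroup E]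
    [NormedSpace ℝ E] [CompleteSpace E] {B : ℝ} (hB : 0 < B) {k : ℝ → E}
    (hk : IntegrableOn (fun u => Real.exp (-u) • k (4 / B * u)) (Set.Ioi 0)) :
    ∫ x, ∫ y, (landauDensity B x * landauDensity B y) • k (‖x - y‖ ^ 2) =
      ∫ u in Set.Ioi (0 : ℝ), Real.exp (-u) • k (4 / B * u) := by
  let g (r : ℝ) : E := Real.exp (-(B / 2 * (B / 2) / (B / 2 + B / 2)) * r) • k r
  have hg (u : ℝ) : Real.exp (-u) • k (4 / B * u) = g (4 / B * u) := by
    simp only [g]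
    congr 2
    field
  have hg_int : Integrable fun w : EuclideanSpace ℝ (Fin 2) => g (‖w‖ ^ 2) := by
    simp only [hg] at hk
    rw [integrableOn_Ioi_comp_mul_left_iff g 0 (by positivity), mul_zero] at hk
    simpa [integrable_comp_sq_norm_addHaar] using hk
  calc
    _ = (B / (2 * π)) ^ 2 • ∫ x : EuclideanSpace ℝ (Fin 2), ∫ y : EuclideanSpace ℝ (Fin 2),
          (Real.exp (-(B / 2) * ‖x‖ ^ 2) * Real.exp (-(B / 2) * ‖y‖ ^ 2)) •
            k (‖x - y‖ ^ 2) := by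
      simp_rw [← integral_smul, smul_smul, landauDensity]
      congr! 5
      ring
    _ = (B / (2 * π)) ^ 2 • (π / B) • ∫ w : EuclideanSpace ℝ (Fin 2), g (‖w‖ ^ 2) := by
      rw [integral_integral_exp_neg_mul_sq_norm_smul_sub (k := fun w => k (‖w‖ ^ 2))
        (by positivity) hg_int]
      simp [g]
    _ = (B / (2 * π)) ^ 2 • (π / B) • π • ∫ u in Set.Ioi (0 : ℝ), g u := by
      rw [integral_comp_sq_norm_addHaar]
      simp [Measure.real, pi_nonneg]
    _ = (4 / B)⁻¹ • ∫ u in Set.Ioi (0 : ℝ), g u := by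
      simp only [smul_smul]
      congr 1
      field
    _ = _ := by
      simp only [hg]
      rw [integral_comp_mul_left_Ioi g 0 (by positivity), mul_zero]

theorem integrableOn_exp_neg_mul_inv_sqrt_mul_add {c s : ℝ} (hc : 0 < c) (hs : 0 ≤ s) :
    IntegrableOn (fun u => Real.exp (-u) * (√(c * u + s))⁻¹) (Set.Ioi 0) := by
  refine ((Real.GammaIntegral_convergent one_half_pos).const_mul (√c)⁻¹).mono' (by fun_prop) ?_
  filter_upwards [ae_restrict_mem measurableSet_Ioi] with u (hu : 0 < u)
  calc
    ‖Real.exp (-u) * (√(c * u + s))⁻¹‖ = Real.exp (-u) * (√(c * u + s))⁻¹ :=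
      Real.norm_of_nonneg (by positivity)
    _ ≤ Real.exp (-u) * (√(c * u))⁻¹ := by gcongr; linarith
    _ = (√c)⁻¹ * (Real.exp (-u) * u ^ (1 / 2 - 1 : ℝ)) := by
      rw [Real.sqrt_mul hc.le, mul_inv, mul_left_comm, show (1 / 2 - 1 : ℝ) = -(1 / 2) by norm_num,
        Real.rpow_neg hu.le, ← Real.sqrt_eq_rpow]

theorem one_div_sqrt_two_mul_VU (B t : ℝ) :
    1 / √2 * VU B (t / √2) =
      ∫ u in Set.Ioi (0 : ℝ), Real.exp (-u) * (√(4 / B * u + t ^ 2))⁻¹ := by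
  rw [VU, ← integral_const_mul]
  congr with u
  have h_sqrt : √(4 / B * u + t ^ 2) = √2 * √((t / √2) ^ 2 + 2 * u / B) := by
    rw [← Real.sqrt_mul zero_le_two, div_pow, Real.sq_sqrt zero_le_two]
    ring_nf
  rw [h_sqrt]
  ring

/-- **Effective self-interaction in the lowest Landau level:**
`∫∫ |γ_B(x_⊥)|²|γ_B(y_⊥)|² / √(|x_⊥−y_⊥|² + t²) dx_⊥ dy_⊥ = (1/√2) V_U^B(t/√2)`. -/
theorem landau_density_self_interaction (B : ℝ) (hB : 0 < B) (t : ℝ) :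
    (∫ x : EuclideanSpace ℝ (Fin 2), ∫ y : EuclideanSpace ℝ (Fin 2),
        (B / (2 * π) * Real.exp (-(B / 2) * ‖x‖ ^ 2)) *
          (B / (2 * π) * Real.exp (-(B / 2) * ‖y‖ ^ 2)) /
            Real.sqrt (‖x - y‖ ^ 2 + t ^ 2)) =
      1 / Real.sqrt 2 * VU B (t / Real.sqrt 2) := by
  calc
    _ = ∫ x, ∫ y, (landauDensity B x * landauDensity B y) • (√(‖x - y‖ ^ 2 + t ^ 2))⁻¹ := by
      simp only [landauDensity, smul_eq_mul, div_eq_mul_inv]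
    _ = ∫ u in Set.Ioi (0 : ℝ), Real.exp (-u) * (√(4 / B * u + t ^ 2))⁻¹ :=
      integral_integral_landauDensity_smul_comp_sq_norm_sub hB (k := fun r => (√(r + t ^ 2))⁻¹)
        (integrableOn_exp_neg_mul_inv_sqrt_mul_add (by positivity) (sq_nonneg t))
    _ = 1 / √2 * VU B (t / √2) := (one_div_sqrt_two_mul_VU B t).symm
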